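/- arXiv:2602.04232 — 3 statements merged into one kernel-verified Lean document; each statement's English description precedes it below -/
import Mathlib

section
/- Let k be a positive integer and θ an odd integer. Define q : ℤ/2^kℤ → ℚ/2ℤ by q(ā) = θa²/2^k mod 2ℤ, on representatives a (this is well defined). Then there is no group automorphism f of ℤ/2^kℤ with q(f(x)) = −q(x) for all x. -/
/-- The group `ℚ/2ℤ`. -/
abbrev QModTwo : Type := ℚ ⧸ AddSubgroup.zmultiples (2 : ℚ)

/-- The canonical projection `ℚ → ℚ/2ℤ`. -/
noncomputable def toQ2 : ℚ →+ QModTwo := QuotientAddGroup.mk' _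

/-- The discriminant form `q(a) = θa²/2^k mod 2ℤ` on `ℤ/2^kℤ`. -/
noncomputable def q10 (k : ℕ) (θ : ℤ) (a : ZMod (2 ^ k)) : QModTwo :=
  toQ2 ((θ : ℚ) * (a.val : ℚ) ^ 2 / (2 : ℚ) ^ k)

/-!
If `q(x) = -q(y)`, then `2^(k+1)` divides `θ(x² + y²)`, so `4 ∣ x² + y²` because `θ` is odd and
`k ≥ 1`. This is impossible when `y` is a unit: `y` is then odd, and squares are `0` or `1` mod `4`.
Hence no value of `q` is the negative of `q(1)`.
-/

theorem toQ2_eq_zero_iff {r : ℚ} : toQ2 r = 0 ↔ ∃ m : ℤ, r = 2 * m := by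
  rw [toQ2, QuotientAddGroup.mk'_apply, QuotientAddGroup.eq_zero_iff,
    AddSubgroup.mem_zmultiples_iff]
  simp only [zsmul_eq_mul, mul_comm, eq_comm]

theorem toQ2_intCast_div_eq_zero_iff {a n : ℤ} (hn : n ≠ 0) :
    toQ2 (a / n) = 0 ↔ 2 * n ∣ a := by
  have hn' : (n : ℚ) ≠ 0 := Int.cast_ne_zero.mpr hn
  rw [toQ2_eq_zero_iff, dvd_def]
  refine exists_congr fun m ↦ ?_
  rw [div_eq_iff hn', mul_right_comm]
  norm_cast

theorem q10_eq_neg_iff {k : ℕ} {θ : ℤ} {x y : ZMod (2 ^ k)} :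
    q10 k θ x = -q10 k θ y ↔ 2 ^ (k + 1) ∣ θ * ((x.val : ℤ) ^ 2 + (y.val : ℤ) ^ 2) := by
  rw [pow_succ' (2 : ℤ) k, ← toQ2_intCast_div_eq_zero_iff (pow_ne_zero k two_ne_zero),
    eq_neg_iff_add_eq_zero, q10, q10, ← map_add, ← add_div, ← mul_add]
  push_cast
  rfl

theorem odd_val_of_isUnit {n : ℕ} (hn : Even n) {y : ZMod n} (hy : IsUnit y) : Odd y.val := by
  obtain ⟨u, rfl⟩ := hy
  exact Nat.coprime_two_right.mp ((ZMod.val_coe_unit_coprime u).coprime_dvd_right hn.two_dvd)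

theorem not_four_dvd_sq_add_sq_of_odd (x : ℤ) {y : ℤ} (hy : Odd y) : ¬ 4 ∣ x ^ 2 + y ^ 2 := by
  have hy_sq : y ^ 2 % 4 = 1 := Int.sq_mod_four_eq_one_of_odd hy
  rcases x.even_or_odd with ⟨w, rfl⟩ | hx
  · have hx_sq : (w + w) ^ 2 = 4 * w ^ 2 := by ring
    omega
  · have hx_sq : x ^ 2 % 4 = 1 := Int.sq_mod_four_eq_one_of_odd hx
    omega

theorem statement10_general (k : ℕ) (hk : 0 < k) (θ : ℤ) (hθ : Odd θ) (x : ZMod (2 ^ k))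
    {y : ZMod (2 ^ k)} (hy : IsUnit y) : q10 k θ x ≠ -q10 k θ y := by
  intro h
  have four_dvd_mul : 4 ∣ θ * ((x.val : ℤ) ^ 2 + (y.val : ℤ) ^ 2) :=
    (pow_dvd_pow 2 (Nat.succ_le_succ hk)).trans (q10_eq_neg_iff.mp h)
  have coprime_four : IsCoprime (4 : ℤ) θ :=
    (Int.isCoprime_two_left.mpr hθ).pow_left (m := 2)
  have odd_val : Odd (y.val : ℤ) :=
    (odd_val_of_isUnit (even_two.pow_of_ne_zero hk.ne') hy).natCast
  exact not_four_dvd_sq_add_sq_of_odd _ odd_val (coprime_four.dvd_of_dvd_mul_left four_dvd_mul)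

/-- for `k ≥ 1` and `θ` odd, the form `q(a) = θa²/2^k` on `ℤ/2^kℤ`
admits no anti-automorphism. -/
theorem statement10 (k : ℕ) (hk : 0 < k) (θ : ℤ) (hθ : Odd θ) :
    ¬ ∃ f : ZMod (2 ^ k) ≃+ ZMod (2 ^ k),
        ∀ x : ZMod (2 ^ k), q10 k θ (f x) = - q10 k θ x := by
  rintro ⟨f, hf⟩
  exact statement10_general k hk θ hθ (f 1) isUnit_one (hf 1)
end

section
/- Let k₁, k₂ be positive integers and θ₁, θ₂ odd integers. Define q : (ℤ/2^{k₁}ℤ) × (ℤ/2^{k₂}ℤ) → ℚ/2ℤ by q(ā₁, ā₂) = θ₁a₁²/2^{k₁} + θ₂a₂²/2^{k₂} mod 2ℤ, on representatives a₁, a₂ (this is well defined). Then there exists a group automorphism f of (ℤ/2^{k₁}ℤ) × (ℤ/2^{k₂}ℤ) with q(f(x)) = −q(x) for all x if and only if |k₁ − k₂| ≤ 1 and θ₁ + θ₂ ≡ 0 (mod 4). -/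
/-- The discriminant form `q(a₁,a₂) = θ₁a₁²/2^k₁ + θ₂a₂²/2^k₂ mod 2ℤ`. -/
noncomputable def q12 (k₁ k₂ : ℕ) (θ₁ θ₂ : ℤ) (a : ZMod (2 ^ k₁) × ZMod (2 ^ k₂)) : QModTwo :=
  toQ2 ((θ₁ : ℚ) * (a.1.val : ℚ) ^ 2 / (2 : ℚ) ^ k₁ +
    (θ₂ : ℚ) * (a.2.val : ℚ) ^ 2 / (2 : ℚ) ^ k₂)

/-!
Over `ℤ`, the value `θ₁ * q` of the form `q = θ₁ a² + 2^d θ₂ b²` is the norm of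
`θ₁ a + b √(-2^d θ₁ θ₂)`. If `x² + 2^d θ₁ θ₂ y²` is `-1` to high 2-adic precision, multiplication
by the element `x + y √(-2^d θ₁ θ₂)` of norm `-1`, composed with conjugation, negates `q`; it is
the matrix `(x, 2^d θ₂ y; θ₁ y, -x)`, whose square is the scalar `-1`, so it is invertible.
For `d ≤ 1` and `θ₁ θ₂ ≡ -1 mod 4` such `x, y` exist because odd integers that agree modulo `8`
differ by a 2-adic square factor.
Conversely, an anti-automorphism sends `(1, 0)` to some `(x, y)` with
`θ₁ (x² + 1) + 2^d θ₂ y² ≡ 0` modulo `2^(d+2)`, and squares modulo `4` and `8` do the rest.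
-/

/-- `q` admits an anti-automorphism: an additive automorphism of the source that negates `q`. -/
def HasAntiAutomorphism {A B : Type*} [Add A] [Neg B] (q : A → B) : Prop :=
  ∃ f : A ≃+ A, ∀ x, q (f x) = -q x

namespace HasAntiAutomorphism

theorem comp_addEquiv {A A' B : Type*} [Add A] [Add A'] [Neg B] {q : A → B}
    (h : HasAntiAutomorphism q) (e : A' ≃+ A) : HasAntiAutomorphism (q ∘ e) := by
  obtain ⟨f, hf⟩ := h
  exact ⟨(e.trans f).trans e.symm, fun x => by simp [hf]⟩

theorem of_comp_self_eq_neg {A B : Type*} [AddGroup A] [Neg B] {q : A → B} (f : A →+ A)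
    (hff : ∀ x, f (f x) = -x) (hf : ∀ x, q (f x) = -q x) : HasAntiAutomorphism q :=
  ⟨{ f with
      invFun := fun x => -f x
      left_inv := fun x => by simp [hff]
      right_inv := fun x => by simp [hff] }, hf⟩

end HasAntiAutomorphism

theorem exists_addMonoidHom_zmod_prod_zmod {m n : ℕ} (A B C D : ℤ) (hB : (m : ℤ) ∣ n * B)
    (hC : (n : ℤ) ∣ m * C) :
    ∃ f : ZMod m × ZMod n →+ ZMod m × ZMod n,
      ∀ a b : ℤ, f (a, b) = (((A * a + B * b : ℤ) : ZMod m), ((C * a + D * b : ℤ) : ZMod n)) := by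
  have hB' : (n : ZMod m) * B = 0 := by
    exact_mod_cast (ZMod.intCast_zmod_eq_zero_iff_dvd _ _).2 hB
  have hC' : (m : ZMod n) * C = 0 := by
    exact_mod_cast (ZMod.intCast_zmod_eq_zero_iff_dvd _ _).2 hC
  let column₁ : ZMod m × ZMod n := (A, C)
  let column₂ : ZMod m × ZMod n := (B, D)
  refine ⟨(ZMod.lift m ⟨zmultiplesHom _ column₁, by simp [column₁, hC']⟩).coprod
    (ZMod.lift n ⟨zmultiplesHom _ column₂, by simp [column₂, hB']⟩), fun a b => ?_⟩
  simp [column₁, column₂, mul_comm]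

theorem exists_intCast_prod_eq {m n : ℕ} (p : ZMod m × ZMod n) :
    ∃ a b : ℤ, ((a : ZMod m), (b : ZMod n)) = p := by
  obtain ⟨a, ha⟩ := ZMod.intCast_surjective p.1
  obtain ⟨b, hb⟩ := ZMod.intCast_surjective p.2
  exact ⟨a, b, Prod.ext ha hb⟩

theorem intCast_eq_neg_intCast_of_dvd_add {n : ℕ} {a b : ℤ} (h : (n : ℤ) ∣ a + b) :
    (a : ZMod n) = -b := by
  rw [← add_eq_zero_iff_eq_neg, ← Int.cast_add]
  exact (ZMod.intCast_zmod_eq_zero_iff_dvd _ _).2 h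

theorem two_mul_dvd_sq_sub_sq {R : Type*} [CommRing R] {n a b : R} (hn : Even n)
    (h : n ∣ a - b) : 2 * n ∣ a ^ 2 - b ^ 2 := by
  have hsum : 2 ∣ a + b := by
    rw [show a + b = (a - b) + 2 * b by ring]
    exact dvd_add (hn.two_dvd.trans h) (dvd_mul_right 2 b)
  rw [sq_sub_sq]
  exact mul_dvd_mul hsum h

theorem four_dvd_sq_of_even {x : ℤ} (hx : Even x) : 4 ∣ x ^ 2 :=
  pow_dvd_pow_of_dvd hx.two_dvd 2

theorem not_four_dvd_odd_mul_sq_add_one {u : ℤ} (hu : Odd u) (x : ℤ) :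
    ¬ 4 ∣ u * (x ^ 2 + 1) := by
  intro h
  have hcop : IsCoprime (2 ^ 2) u := (Int.isCoprime_two_left.2 hu).pow_left
  have h4 : 4 ∣ x ^ 2 + 1 := hcop.dvd_of_dvd_mul_left h
  rcases Int.even_or_odd x with hx | hx
  · have := four_dvd_sq_of_even hx
    omega
  · have := Int.sq_mod_four_eq_one_of_odd hx
    omega

theorem four_dvd_add_of_four_dvd_add_mul_sq {u v y : ℤ} (hu : Odd u) (h : 4 ∣ u + v * y ^ 2) :
    4 ∣ u + v := by
  have hy : Odd y := by
    have hsum : Even (u + v * y ^ 2) := even_iff_two_dvd.2 (dvd_trans (by norm_num) h)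
    by_contra hy
    rw [Int.not_odd_iff_even] at hy
    exact Int.not_even_iff_odd.2 (hu.add_even ((hy.pow_of_ne_zero two_ne_zero).mul_left v)) hsum
  have hsq : 4 ∣ y ^ 2 - 1 := dvd_trans (by norm_num) (Int.eight_dvd_sq_sub_one_of_odd hy)
  rw [show u + v = u + v * y ^ 2 - v * (y ^ 2 - 1) by ring]
  exact dvd_sub h (hsq.mul_left v)

theorem four_dvd_mul_add_one_of_four_dvd_add {u v : ℤ} (hu : Odd u) (h : 4 ∣ u + v) :
    4 ∣ u * v + 1 := by
  have hsq : 4 ∣ u ^ 2 - 1 := dvd_trans (by norm_num) (Int.eight_dvd_sq_sub_one_of_odd hu)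
  rw [show u * v + 1 = u * (u + v) - (u ^ 2 - 1) by ring]
  exact dvd_sub (h.mul_left u) hsq

theorem exists_odd_two_pow_dvd_mul_sq_sub {u a : ℤ} (hu : Odd u) (h : 8 ∣ u - a) (n : ℕ) :
    ∃ y : ℤ, Odd y ∧ 2 ^ (n + 3) ∣ u * y ^ 2 - a := by
  induction n with
  | zero => exact ⟨1, odd_one, by simpa using h⟩
  | succ n ih =>
    obtain ⟨y, hy, m, hm⟩ := ih
    rcases Int.even_or_odd' m with ⟨r, rfl | rfl⟩
    · exact ⟨y, hy, r, by rw [hm]; ring⟩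
    · -- replacing `y` by `y + 2 ^ (n + 2)` changes `u * y ^ 2` by an odd multiple of `2 ^ (n + 3)`
      obtain ⟨s, hs⟩ := hu.mul hy
      exact ⟨y + 2 ^ (n + 2), hy.add_even (by simp [parity_simps]), r + s + 1 + u * 2 ^ n, by
        linear_combination hm + 2 ^ (n + 3) * hs⟩

theorem exists_two_pow_dvd_sq_add_mul_sq_add_one {t : ℤ} (ht : 4 ∣ t + 1) (n : ℕ) :
    ∃ x y : ℤ, 2 ^ n ∣ x ^ 2 + t * y ^ 2 + 1 := by
  -- `t` is `-1` or `-5` modulo `8`, and these are the values `-1 - x ^ 2` for `x = 0` and `x = 2`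
  obtain ⟨x, hx⟩ : ∃ x : ℤ, 8 ∣ t - (-1 - x ^ 2) := by
    rcases (by omega : 8 ∣ t + 1 ∨ 8 ∣ t + 5) with h | h
    · exact ⟨0, by simpa using h⟩
    · exact ⟨2, by norm_num [h]⟩
  have hodd : Odd t := Int.odd_iff.2 (by omega)
  obtain ⟨y, -, hy⟩ := exists_odd_two_pow_dvd_mul_sq_sub hodd hx n
  exact ⟨x, y, (pow_dvd_pow 2 (Nat.le_add_right n 3)).trans (hy.trans (dvd_of_eq (by ring)))⟩

theorem exists_two_pow_dvd_sq_add_two_mul_mul_sq_add_one {t : ℤ} (ht : 4 ∣ t + 1) (n : ℕ) :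
    ∃ x y : ℤ, 2 ^ n ∣ x ^ 2 + 2 * t * y ^ 2 + 1 := by
  obtain ⟨x, -, hx⟩ :=
    exists_odd_two_pow_dvd_mul_sq_sub odd_one (show 8 ∣ 1 - (-1 - 2 * t) by omega) n
  exact ⟨x, 1, (pow_dvd_pow 2 (Nat.le_add_right n 3)).trans (hx.trans (dvd_of_eq (by ring)))⟩

theorem four_dvd_add_of_four_dvd_mul_sq_add_one_add {u v x y : ℤ} (hu : Odd u) (hv : Odd v)
    (h : 4 ∣ u * (x ^ 2 + 1) + v * y ^ 2) : 4 ∣ u + v := by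
  have hx : Even x := by
    by_contra hx
    rw [Int.not_even_iff_odd] at hx
    have hnorm : Even (u * (x ^ 2 + 1)) := (hx.pow.add_odd odd_one).mul_left u
    have hvy : Even (v * y ^ 2) :=
      (Int.even_add.1 (even_iff_two_dvd.2 (dvd_trans (by norm_num) h))).1 hnorm
    have hy : Even y :=
      (Int.even_pow.1 ((Int.even_mul.1 hvy).resolve_left (Int.not_even_iff_odd.2 hv))).1
    exact not_four_dvd_odd_mul_sq_add_one hu x
      ((dvd_add_left ((four_dvd_sq_of_even hy).mul_left v)).1 h)
  refine four_dvd_add_of_four_dvd_add_mul_sq (y := y) hu ?_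
  rw [show u + v * y ^ 2 = u * (x ^ 2 + 1) + v * y ^ 2 - u * x ^ 2 by ring]
  exact dvd_sub h ((four_dvd_sq_of_even hx).mul_left u)

theorem four_dvd_add_of_eight_dvd_mul_sq_add_one_add {u v x y : ℤ} (hu : Odd u)
    (h : 8 ∣ u * (x ^ 2 + 1) + 2 * v * y ^ 2) : 4 ∣ u + v := by
  have hx : Odd x := by
    have hsum : Even (u * (x ^ 2 + 1) + 2 * v * y ^ 2) :=
      even_iff_two_dvd.2 (dvd_trans (by norm_num) h)
    have hu' : ¬ Even u := Int.not_even_iff_odd.2 hu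
    by_contra hx
    simp [parity_simps, hu', hx] at hsum
  have hx8 : 8 ∣ x ^ 2 - 1 := Int.eight_dvd_sq_sub_one_of_odd hx
  refine four_dvd_add_of_four_dvd_add_mul_sq (y := y) hu ?_
  refine (mul_dvd_mul_iff_left (two_ne_zero (α := ℤ))).1 ?_
  rw [show 2 * (u + v * y ^ 2) = u * (x ^ 2 + 1) + 2 * v * y ^ 2 - u * (x ^ 2 - 1) by ring]
  exact dvd_sub h (hx8.mul_left u)

theorem le_one_and_four_dvd_add_of_two_pow_dvd {d : ℕ} {u v x y : ℤ} (hu : Odd u) (hv : Odd v)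
    (h : 2 ^ (d + 2) ∣ u * (x ^ 2 + 1) + 2 ^ d * v * y ^ 2) : d ≤ 1 ∧ 4 ∣ u + v := by
  match d with
  | 0 =>
    refine ⟨zero_le_one, four_dvd_add_of_four_dvd_mul_sq_add_one_add (x := x) (y := y) hu hv ?_⟩
    simpa using h
  | 1 =>
    refine ⟨le_rfl, four_dvd_add_of_eight_dvd_mul_sq_add_one_add (x := x) (y := y) hu ?_⟩
    simpa using h
  | d + 2 =>
    have hvy : 4 ∣ 2 ^ (d + 2) * v * y ^ 2 := ⟨2 ^ d * v * y ^ 2, by ring⟩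
    have h4 : 4 ∣ u * (x ^ 2 + 1) + 2 ^ (d + 2) * v * y ^ 2 :=
      dvd_trans ⟨2 ^ (d + 2), by ring⟩ h
    exact absurd ((dvd_add_left hvy).1 h4) (not_four_dvd_odd_mul_sq_add_one hu x)

theorem toQ2_div_eq_toQ2_div_iff {n : ℤ} (hn : n ≠ 0) (s t : ℤ) :
    toQ2 (s / n) = toQ2 (t / n) ↔ 2 * n ∣ s - t := by
  have hn' : (n : ℚ) ≠ 0 := Int.cast_ne_zero.2 hn
  have clear_denominator (m : ℤ) : m • (2 : ℚ) = s / n - t / n ↔ s - t = 2 * n * m := by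
    rw [← sub_div, eq_div_iff hn', ← Int.cast_inj (α := ℚ), eq_comm]
    push_cast
    rw [zsmul_eq_mul, mul_comm (m : ℚ), mul_right_comm]
  change (QuotientAddGroup.mk _ : QModTwo) = QuotientAddGroup.mk _ ↔ _
  simp only [QuotientAddGroup.eq_iff_sub_mem, AddSubgroup.mem_zmultiples_iff, clear_denominator,
    dvd_def]

theorem q12_comp_prodComm (k₁ k₂ : ℕ) (θ₁ θ₂ : ℤ) :
    q12 k₁ k₂ θ₁ θ₂ ∘ AddEquiv.prodComm = q12 k₂ k₁ θ₂ θ₁ := by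
  funext p
  simp [q12, add_comm]

theorem hasAntiAutomorphism_q12_comm (k₁ k₂ : ℕ) (θ₁ θ₂ : ℤ) :
    HasAntiAutomorphism (q12 k₁ k₂ θ₁ θ₂) ↔ HasAntiAutomorphism (q12 k₂ k₁ θ₂ θ₁) := by
  constructor <;> intro h <;> rw [← q12_comp_prodComm] <;> exact h.comp_addEquiv _

theorem dvd_val_intCast_sub (n : ℕ) [NeZero n] (a : ℤ) :
    (n : ℤ) ∣ ((a : ZMod n).val : ℤ) - a := by
  rw [← ZMod.intCast_eq_intCast_iff_dvd_sub]
  simp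

theorem two_mul_dvd_val_intCast_sq_sub_sq {n : ℕ} [NeZero n] (hn : Even n) (a : ℤ) :
    2 * (n : ℤ) ∣ ((a : ZMod n).val : ℤ) ^ 2 - a ^ 2 :=
  two_mul_dvd_sq_sub_sq ((Int.even_coe_nat n).2 hn) (dvd_val_intCast_sub n a)

theorem two_pow_succ_dvd_val_intCast_sq_sub_sq {k : ℕ} (hk : 0 < k) (a : ℤ) :
    2 ^ (k + 1) ∣ ((a : ZMod (2 ^ k)).val : ℤ) ^ 2 - a ^ 2 := by
  rw [pow_succ']
  exact_mod_cast two_mul_dvd_val_intCast_sq_sub_sq (even_two.pow_of_ne_zero hk.ne') a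

theorem q12_intCast {k : ℕ} (hk : 0 < k) (d : ℕ) (θ₁ θ₂ a b : ℤ) :
    q12 (k + d) k θ₁ θ₂ (a, b) =
      toQ2 ((θ₁ * a ^ 2 + 2 ^ d * θ₂ * b ^ 2 : ℤ) / (2 ^ (k + d) : ℤ)) := by
  set a' : ℤ := ((a : ZMod (2 ^ (k + d))).val : ℤ) with ha'
  set b' : ℤ := ((b : ZMod (2 ^ k)).val : ℤ) with hb'
  have common_denominator : q12 (k + d) k θ₁ θ₂ (a, b) =
      toQ2 ((θ₁ * a' ^ 2 + 2 ^ d * θ₂ * b' ^ 2 : ℤ) / (2 ^ (k + d) : ℤ)) := by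
    rw [q12]
    congr 1
    push_cast [ha', hb']
    field_simp
    ring
  have ha : (2 : ℤ) ^ (k + d + 1) ∣ a' ^ 2 - a ^ 2 :=
    two_pow_succ_dvd_val_intCast_sq_sub_sq (by omega) a
  have hb : (2 : ℤ) ^ (k + d + 1) ∣ 2 ^ d * (b' ^ 2 - b ^ 2) := by
    rw [show k + d + 1 = d + (k + 1) by omega, pow_add]
    exact mul_dvd_mul_left _ (two_pow_succ_dvd_val_intCast_sq_sub_sq hk b)
  rw [common_denominator, toQ2_div_eq_toQ2_div_iff (by positivity), ← pow_succ']
  exact (dvd_add (ha.mul_left θ₁) (hb.mul_left θ₂)).trans (dvd_of_eq (by ring))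

theorem q12_eq_neg_q12_iff {k : ℕ} (hk : 0 < k) (d : ℕ) (θ₁ θ₂ a b c e : ℤ) :
    q12 (k + d) k θ₁ θ₂ (a, b) = -q12 (k + d) k θ₁ θ₂ (c, e) ↔
      2 ^ (k + d + 1) ∣ θ₁ * (a ^ 2 + c ^ 2) + 2 ^ d * θ₂ * (b ^ 2 + e ^ 2) := by
  rw [q12_intCast hk, q12_intCast hk, ← map_neg, ← neg_div, ← Int.cast_neg,
    toQ2_div_eq_toQ2_div_iff (by positivity), ← pow_succ']
  ring_nf

theorem hasAntiAutomorphism_q12_of_two_pow_dvd {k d : ℕ} (hk : 0 < k) {θ₁ θ₂ x y : ℤ}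
    (h : 2 ^ (k + d + 1) ∣ x ^ 2 + 2 ^ d * (θ₁ * θ₂) * y ^ 2 + 1) :
    HasAntiAutomorphism (q12 (k + d) k θ₁ θ₂) := by
  obtain ⟨f, hf⟩ := exists_addMonoidHom_zmod_prod_zmod
    (m := 2 ^ (k + d)) (n := 2 ^ k) x (2 ^ d * θ₂ * y) (θ₁ * y) (-x)
    ⟨θ₂ * y, by push_cast; ring⟩ ⟨2 ^ d * (θ₁ * y), by push_cast; ring⟩
  refine .of_comp_self_eq_neg f (fun p => ?_) (fun p => ?_) <;>
    obtain ⟨a, b, rfl⟩ := exists_intCast_prod_eq p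
  · have hdvd {j : ℕ} (hj : j ≤ k + d + 1) :
        ((2 ^ j : ℕ) : ℤ) ∣ x ^ 2 + 2 ^ d * (θ₁ * θ₂) * y ^ 2 + 1 := by
      exact_mod_cast (pow_dvd_pow 2 hj).trans h
    rw [hf, hf]
    exact Prod.ext
      (intCast_eq_neg_intCast_of_dvd_add
        (((hdvd (by omega)).mul_right a).trans (dvd_of_eq (by ring))))
      (intCast_eq_neg_intCast_of_dvd_add
        (((hdvd (by omega)).mul_right b).trans (dvd_of_eq (by ring))))
  · rw [hf, q12_eq_neg_q12_iff hk]
    exact (h.mul_right (θ₁ * a ^ 2 + 2 ^ d * θ₂ * b ^ 2)).trans (dvd_of_eq (by ring))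

theorem hasAntiAutomorphism_q12_of_four_dvd {k d : ℕ} (hk : 0 < k) (hd : d ≤ 1) {θ₁ θ₂ : ℤ}
    (h : 4 ∣ θ₁ * θ₂ + 1) : HasAntiAutomorphism (q12 (k + d) k θ₁ θ₂) := by
  obtain ⟨x, y, hxy⟩ : ∃ x y : ℤ, 2 ^ (k + d + 1) ∣ x ^ 2 + 2 ^ d * (θ₁ * θ₂) * y ^ 2 + 1 := by
    interval_cases d
    · simpa using exists_two_pow_dvd_sq_add_mul_sq_add_one h (k + 1)
    · simpa using exists_two_pow_dvd_sq_add_two_mul_mul_sq_add_one h (k + 2)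
  exact hasAntiAutomorphism_q12_of_two_pow_dvd hk hxy

theorem le_one_and_four_dvd_add_of_q12_eq_neg_q12 {k d : ℕ} (hk : 0 < k) {θ₁ θ₂ : ℤ} (hθ₁ : Odd θ₁)
    (hθ₂ : Odd θ₂) {p : ZMod (2 ^ (k + d)) × ZMod (2 ^ k)}
    (hp : q12 (k + d) k θ₁ θ₂ p = -q12 (k + d) k θ₁ θ₂ (1, 0)) : d ≤ 1 ∧ 4 ∣ θ₁ + θ₂ := by
  obtain ⟨x, y, rfl⟩ := exists_intCast_prod_eq p
  rw [← Int.cast_one, ← Int.cast_zero, q12_eq_neg_q12_iff hk] at hp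
  have hdvd := (pow_dvd_pow 2 (by omega : d + 2 ≤ k + d + 1)).trans hp
  exact le_one_and_four_dvd_add_of_two_pow_dvd hθ₁ hθ₂ (by simpa using hdvd)

theorem hasAntiAutomorphism_q12_iff {k : ℕ} (hk : 0 < k) (d : ℕ) {θ₁ θ₂ : ℤ} (hθ₁ : Odd θ₁)
    (hθ₂ : Odd θ₂) : HasAntiAutomorphism (q12 (k + d) k θ₁ θ₂) ↔ d ≤ 1 ∧ 4 ∣ θ₁ + θ₂ := by
  constructor
  · rintro ⟨f, hf⟩
    exact le_one_and_four_dvd_add_of_q12_eq_neg_q12 hk hθ₁ hθ₂ (hf (1, 0))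
  · rintro ⟨hd, h4⟩
    exact hasAntiAutomorphism_q12_of_four_dvd hk hd (four_dvd_mul_add_one_of_four_dvd_add hθ₁ h4)

/-- for `k₁, k₂ ≥ 1` and odd `θ₁, θ₂`, the form
`q(a₁,a₂) = θ₁a₁²/2^k₁ + θ₂a₂²/2^k₂` on `(ℤ/2^k₁ℤ) × (ℤ/2^k₂ℤ)` admits an
anti-automorphism iff `|k₁ - k₂| ≤ 1` and `θ₁ + θ₂ ≡ 0 (mod 4)`. -/
theorem statement12 (k₁ k₂ : ℕ) (hk₁ : 0 < k₁) (hk₂ : 0 < k₂)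
    (θ₁ θ₂ : ℤ) (hθ₁ : Odd θ₁) (hθ₂ : Odd θ₂) :
    (∃ f : (ZMod (2 ^ k₁) × ZMod (2 ^ k₂)) ≃+ (ZMod (2 ^ k₁) × ZMod (2 ^ k₂)),
        ∀ x, q12 k₁ k₂ θ₁ θ₂ (f x) = - q12 k₁ k₂ θ₁ θ₂ x) ↔
      (|(k₁ : ℤ) - (k₂ : ℤ)| ≤ 1 ∧ (4 : ℤ) ∣ (θ₁ + θ₂)) := by
  change HasAntiAutomorphism (q12 k₁ k₂ θ₁ θ₂) ↔ _
  wlog hle : k₂ ≤ k₁ generalizing k₁ k₂ θ₁ θ₂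
  · rw [hasAntiAutomorphism_q12_comm, abs_sub_comm, add_comm θ₁]
    exact this k₂ k₁ hk₂ hk₁ θ₂ θ₁ hθ₂ hθ₁ (le_of_not_ge hle)
  obtain ⟨d, rfl⟩ := Nat.exists_eq_add_of_le hle
  have hdiff : |((k₂ + d : ℕ) : ℤ) - k₂| ≤ 1 ↔ d ≤ 1 := by simp
  rw [hasAntiAutomorphism_q12_iff hk₂ d hθ₁ hθ₂, hdiff]
end

section
/- Let m be an odd positive integer and θ an integer coprime to m. Define q : ℤ/mℤ → ℚ/2ℤ by q(ā) = 2θa²/m mod 2ℤ, on representatives a (this is well defined). Then there exists a group automorphism f of ℤ/mℤ with q(f(x)) = −q(x) for all x if and only if every prime divisor of m is congruent to 1 modulo 4. -/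
/-- The discriminant form `q(a) = 2θa²/m mod 2ℤ` on `ℤ/mℤ`. -/
noncomputable def q17 (m : ℕ) (θ : ℤ) (a : ZMod m) : QModTwo :=
  toQ2 (2 * (θ : ℚ) * (a.val : ℚ) ^ 2 / (m : ℚ))

/-!
Since `θ` is invertible modulo `m`, the equation `q(y) = -q(x)` just says `y² = -x²` in `ℤ/mℤ`.
An additive automorphism `f` with `q(f(x)) = -q(x)` sends `1` to a square root of `-1`; conversely,
multiplication by such a root is one. So the question is when `-1` is a square modulo `m`. For
odd `m` this depends only on the radical `r` of `m`: if `z² ≡ -1` modulo `r`, then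
`(z²) ^ rᵏ ≡ (-1) ^ rᵏ = -1` modulo `rᵏ⁺¹` because `r` is odd, and `m` divides a power of `r`.
For squarefree moduli the criterion is classical.
-/

theorem toQ2_two_mul_intCast_div_eq_zero_iff {m : ℕ} [NeZero m] (a : ℤ) :
    toQ2 (2 * (a : ℚ) / (m : ℚ)) = 0 ↔ (a : ZMod m) = 0 := by
  have hm : (m : ℚ) ≠ 0 := NeZero.ne _
  have mem_iff (k : ℤ) : k • (2 : ℚ) = 2 * (a : ℚ) / (m : ℚ) ↔ a = m * k := by
    rw [zsmul_eq_mul, eq_div_iff hm, ← @Int.cast_inj ℚ]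
    push_cast
    constructor <;> intro h <;> linarith
  rw [toQ2, QuotientAddGroup.mk'_apply, QuotientAddGroup.eq_zero_iff,
    AddSubgroup.mem_zmultiples_iff, ZMod.intCast_zmod_eq_zero_iff_dvd]
  exact exists_congr mem_iff

theorem q17_add_q17_eq_zero_iff {m : ℕ} [NeZero m] (θ : ℤ) (x y : ZMod m) :
    q17 m θ x + q17 m θ y = 0 ↔ (θ : ZMod m) * (x ^ 2 + y ^ 2) = 0 := by
  have sum_eq : q17 m θ x + q17 m θ y =
      toQ2 (2 * ((θ * ((x.val : ℤ) ^ 2 + (y.val : ℤ) ^ 2) : ℤ) : ℚ) / (m : ℚ)) := by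
    rw [q17, q17, ← map_add]
    push_cast
    ring_nf
  rw [sum_eq, toQ2_two_mul_intCast_div_eq_zero_iff]
  push_cast
  simp only [ZMod.natCast_zmod_val]

theorem q17_eq_neg_q17_iff {m : ℕ} [NeZero m] {θ : ℤ} (hθ : IsCoprime θ (m : ℤ)) (x y : ZMod m) :
    q17 m θ x = -q17 m θ y ↔ x ^ 2 = -y ^ 2 := by
  have θ_unit : IsUnit (θ : ZMod m) := (ZMod.coe_int_isUnit_iff_isCoprime θ m).2 hθ.symm
  rw [← add_eq_zero_iff_eq_neg, q17_add_q17_eq_zero_iff, θ_unit.mul_right_eq_zero,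
    add_eq_zero_iff_eq_neg]

theorem exists_addEquiv_sq_eq_neg_sq_iff {R : Type*} [CommRing R] :
    (∃ f : R ≃+ R, ∀ x, f x ^ 2 = -x ^ 2) ↔ IsSquare (-1 : R) := by
  constructor
  · rintro ⟨f, hf⟩
    exact ⟨f 1, by rw [← sq, hf, one_pow]⟩
  · rintro ⟨u, hu⟩
    let v : Rˣ := Units.mkOfMulEqOne u (-u) (by rw [mul_neg, ← hu, neg_neg])
    refine ⟨DistribMulAction.toAddEquiv R v, fun x ↦ ?_⟩
    calc (u * x) ^ 2 = u * u * x ^ 2 := by ring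
      _ = -x ^ 2 := by rw [← hu, neg_one_mul]

theorem exists_q17_antiautomorphism_iff_isSquare_neg_one {m : ℕ} [NeZero m] {θ : ℤ}
    (hθ : IsCoprime θ (m : ℤ)) :
    (∃ f : ZMod m ≃+ ZMod m, ∀ x, q17 m θ (f x) = -q17 m θ x) ↔ IsSquare (-1 : ZMod m) := by
  simp only [q17_eq_neg_q17_iff hθ, exists_addEquiv_sq_eq_neg_sq_iff]

theorem isSquare_neg_one_zmod_iff_exists_dvd {n : ℕ} :
    IsSquare (-1 : ZMod n) ↔ ∃ z : ℤ, (n : ℤ) ∣ z ^ 2 + 1 := by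
  have root_iff (z : ℤ) : (-1 : ZMod n) = z * z ↔ (n : ℤ) ∣ z ^ 2 + 1 := by
    rw [← ZMod.intCast_zmod_eq_zero_iff_dvd, eq_comm, ← sq, ← add_eq_zero_iff_eq_neg]
    push_cast
    rfl
  simp only [IsSquare, ZMod.intCast_surjective.exists, root_iff]

theorem isSquare_neg_one_zmod_pow {r : ℕ} (hr : Odd r) (h : IsSquare (-1 : ZMod r)) (k : ℕ) :
    IsSquare (-1 : ZMod (r ^ k)) := by
  obtain ⟨z, hz⟩ := isSquare_neg_one_zmod_iff_exists_dvd.1 h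
  have lifted : (r : ℤ) ^ (k + 1) ∣ (z ^ 2) ^ r ^ k - (-1) ^ r ^ k :=
    dvd_sub_pow_of_dvd_sub (by rwa [sub_neg_eq_add]) k
  rw [hr.pow.neg_one_pow, sub_neg_eq_add, pow_right_comm] at lifted
  refine isSquare_neg_one_zmod_iff_exists_dvd.2 ⟨z ^ r ^ k, ?_⟩
  push_cast
  exact (pow_dvd_pow _ k.le_succ).trans lifted

section Radical

open UniqueFactorizationMonoid

theorem isSquare_neg_one_zmod_iff_radical {n : ℕ} (hn : Odd n) :
    IsSquare (-1 : ZMod n) ↔ IsSquare (-1 : ZMod (radical n)) := by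
  have radical_odd : Odd (radical n) := hn.of_dvd_nat radical_dvd_self
  exact ⟨ZMod.isSquare_neg_one_of_dvd radical_dvd_self, fun h ↦
    ZMod.isSquare_neg_one_of_dvd (Nat.dvd_radical_pow_self hn.pos.ne')
      (isSquare_neg_one_zmod_pow radical_odd h n)⟩

theorem isSquare_neg_one_zmod_iff_forall_prime_mod_four_eq_one {n : ℕ} (hn : Odd n) :
    IsSquare (-1 : ZMod n) ↔ ∀ p : ℕ, p.Prime → p ∣ n → p % 4 = 1 := by
  have mod_four_iff {p : ℕ} (hp : p ∣ n) : p % 4 ≠ 3 ↔ p % 4 = 1 := by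
    have := Nat.odd_iff.1 (hn.of_dvd_nat hp)
    omega
  rw [isSquare_neg_one_zmod_iff_radical hn,
    ZMod.isSquare_neg_one_iff_forall_mem_primeFactors_mod_four_ne_three squarefree_radical,
    Nat.primeFactors_radical]
  simp only [Nat.mem_primeFactors_of_ne_zero hn.pos.ne', and_imp]
  exact forall₃_congr fun _ _ hp ↦ mod_four_iff hp

end Radical

/-- for `m` odd positive and `θ` coprime to `m`, the form `q(a) = 2θa²/m`
on `ℤ/mℤ` admits an anti-automorphism iff every prime divisor of `m` is `≡ 1 (mod 4)`. -/
theorem statement17 (m : ℕ) (hm : 0 < m) (hmodd : Odd m)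
    (θ : ℤ) (hθ : IsCoprime θ (m : ℤ)) :
    (∃ f : ZMod m ≃+ ZMod m, ∀ x : ZMod m, q17 m θ (f x) = - q17 m θ x) ↔
      (∀ p : ℕ, p.Prime → p ∣ m → p % 4 = 1) := by
  have : NeZero m := ⟨hm.ne'⟩
  rw [exists_q17_antiautomorphism_iff_isSquare_neg_one hθ,
    isSquare_neg_one_zmod_iff_forall_prime_mod_four_eq_one hmodd]
end
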